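/- arXiv:math/9302203 — 2 statements merged into one kernel-verified Lean document; each statement's English description precedes it below -/
import Mathlib

section
/- Let U be a nonprincipal p-point ultrafilter on ℕ. Then the game G_U is undetermined: neither player I nor player II has a winning strategy. That is, (1) there is no strategy σ for player I (a function from finite sequences of finite subsets of ℕ to subsets of ℕ such that, against every play of player II, the sets produced by σ are pairwise disjoint, have union ℕ, and each lies outside U) with the property that for every sequence ⟨F_n⟩ of finite sets with F_n ⊆ σ(⟨F_0,…,F_{n-1}⟩) for all n, the union ⋃_n F_n does not belong to U; and (2) there is no strategy μ for player II (a function assigning to every finite nonempty sequence ⟨I_0,…,I_n⟩ of subsets of ℕ a finite set μ(I_0,…,I_n) ⊆ I_n) with the property that for every sequence ⟨I_n⟩ of pairwise disjoint subsets of ℕ, each not in U, whose union is ℕ, the union ⋃_n μ(I_0,…,I_n) belongs to U. -/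
/-- `U` is nonprincipal: it contains no finite set. -/
def Nonprincipal (U : Ultrafilter ℕ) : Prop :=
  ∀ A : Set ℕ, A.Finite → A ∉ U

/-- `U` is a p-point: for every sequence of elements of `U` there is an `X ∈ U`
almost contained in each of them. -/
def IsPPoint (U : Ultrafilter ℕ) : Prop :=
  ∀ A : ℕ → Set ℕ, (∀ n, A n ∈ U) → ∃ X ∈ U, ∀ n, (X \ A n).Finite

/-- A play `F` of player II is consistent with player I's strategy `σ`
if at each stage `n` the finite set `F n` is contained in the set
`σ ⟨F 0, …, F (n-1)⟩` just played by player I. -/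
def ConsistentPlay (σ : List (Finset ℕ) → Set ℕ) (F : ℕ → Finset ℕ) : Prop :=
  ∀ n, ↑(F n) ⊆ σ ((List.range n).map F)

/-- `σ` is a legal strategy for player I: against every play of player II the
sets it produces are pairwise disjoint, lie outside `U`, and cover `ℕ`. -/
def LegalStrategyI (U : Ultrafilter ℕ) (σ : List (Finset ℕ) → Set ℕ) : Prop :=
  ∀ F : ℕ → Finset ℕ, ConsistentPlay σ F →
    (∀ m n, m ≠ n → Disjoint (σ ((List.range m).map F)) (σ ((List.range n).map F))) ∧
    (∀ n, σ ((List.range n).map F) ∉ U) ∧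
    (⋃ n, σ ((List.range n).map F)) = Set.univ

/-- `σ` is a winning strategy for player I: against every consistent play
`F` of player II, the union of player II's moves is not in `U`. -/
def WinningStrategyI (U : Ultrafilter ℕ) (σ : List (Finset ℕ) → Set ℕ) : Prop :=
  LegalStrategyI U σ ∧
    ∀ F : ℕ → Finset ℕ, ConsistentPlay σ F → (⋃ n, ↑(F n) : Set ℕ) ∉ U

/-- `μ` is a legal strategy for player II: to each nonempty finite sequence
`⟨I_0,…,I_n⟩` of moves of player I it assigns a finite subset of the last
move `I_n`. -/
def LegalStrategyII (μ : List (Set ℕ) → Finset ℕ) : Prop :=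
  ∀ (l : List (Set ℕ)) (I : Set ℕ), ↑(μ (l ++ [I])) ⊆ I

/-- `μ` is a winning strategy for player II: for every partition of `ℕ` into
pairwise disjoint sets outside `U` played by player I, the union of player
II's responses via `μ` belongs to `U`. -/
def WinningStrategyII (U : Ultrafilter ℕ) (μ : List (Set ℕ) → Finset ℕ) : Prop :=
  LegalStrategyII μ ∧
    ∀ I : ℕ → Set ℕ,
      (∀ m n, m ≠ n → Disjoint (I m) (I n)) →
      (∀ n, I n ∉ U) →
      (⋃ n, I n) = Set.univ →
      (⋃ n, ↑(μ ((List.range (n + 1)).map I)) : Set ℕ) ∈ U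

/-!
Player I loses to the p-point property: a set `X ∈ U` almost contained in the complement of each of
the countably many moves `σ l ∉ U` meets each of these moves in a finite set, so player II can pick
up all of `X`.

Player II loses by strategy stealing: player I plays two games against `μ` in alternation, with
bounds `m 0 < m 1 < ⋯`. The `k`-th move belongs to the game of parity `k % 2`; it exhausts
`[m k, m (k + 1))` in that game while the response of `μ` stays below `m k`. The two outcomes are
then disjoint above `m 0`, so they cannot both belong to `U`. The bound `m (k + 1)` depends on the
other game, so `m k` must be chosen before it is known. Such a choice exists because otherwise one
could build a sequence of consecutive intervals such that every set containing infinitely many of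
them belongs to `U`, whereas the even and the odd intervals have disjoint unions.
-/

open Function Set

section Recursion

variable {α β : Type*}

theorem eq_map_range_of_succ_eq_append {h : ℕ → List α} {c : ℕ → α} (h_zero : h 0 = [])
    (h_succ : ∀ n, h (n + 1) = h n ++ [c n]) (n : ℕ) : h n = (List.range n).map c := by
  induction n with
  | zero => exact h_zero
  | succ n ih => simp [h_succ, ih, List.range_succ]

theorem exists_forall_eq_apply_map_range (g : List α → α) :
    ∃ F : ℕ → α, ∀ n, F n = g ((List.range n).map F) := by
  let h : ℕ → List α := fun n => (fun l => l ++ [g l])^[n] []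
  exact ⟨fun n => g (h n), fun n => congrArg g <|
    eq_map_range_of_succ_eq_append rfl (fun n => iterate_succ_apply' _ n []) n⟩

/- The even and the odd entries of `c` form two separate sequences. The bound `a (2 * n + r + 2)`
comes from the history of the other sequence and is known only after `a (2 * n + r + 1)`, whence
the order of the quantifiers over `m` and `N` in `hP`. -/
theorem exists_interleaved_seq [Preorder β] [Nonempty β] {P : List α → β → β → β → α → Prop}
    (hP : ∀ l a, ∃ m, a < m ∧ ∀ N, ∃ c, P l a m N c) :
    ∃ (a : ℕ → β) (c : ℕ → α), StrictMono a ∧ ∀ r < 2, ∀ n,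
      P ((List.range n).map fun i => c (2 * i + r))
        (a (2 * n + r)) (a (2 * n + r + 1)) (a (2 * n + r + 2)) (c (2 * n + r)) := by
  choose M lt_M C hC using hP
  -- A state consists of the history about to be extended, the other history, and the last bound.
  let step : List α × List α × β → List α × List α × β := fun ⟨l, l', a⟩ =>
    (l', l ++ [C l a (M l' (M l a))], M l a)
  let state : ℕ → List α × List α × β := fun k => step^[k] ([], [], Classical.arbitrary β)
  have state_succ (k : ℕ) : state (k + 1) = step (state k) := iterate_succ_apply' step k _
  let h : ℕ → List α := fun k => (state k).1
  let a : ℕ → β := fun k => (state k).2.2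
  let c : ℕ → α := fun k => C (h k) (a k) (a (k + 2))
  have a_succ (k : ℕ) : a (k + 1) = M (h k) (a k) := by simp only [a, state_succ]; rfl
  have h_add_two (k : ℕ) : h (k + 2) = h k ++ [c k] := by
    simp only [c, a_succ, h, state_succ]; rfl
  have h_eq (r : ℕ) (hr : r < 2) (n : ℕ) :
      h (2 * n + r) = (List.range n).map fun i => c (2 * i + r) := by
    refine eq_map_range_of_succ_eq_append (h := fun n => h (2 * n + r)) ?_ (fun n => ?_) n
    · interval_cases r <;> rfl
    · rw [← h_add_two]; congr 1; ring
  refine ⟨a, c, strictMono_nat_of_lt_succ fun k => (lt_M _ _).trans_eq (a_succ k).symm,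
    fun r hr n => ?_⟩
  rw [← h_eq r hr, a_succ (2 * n + r)]
  exact hC _ _ _

end Recursion

theorem exists_iUnion_two_mul_add_notMem {α : Type*} (F : Filter α) [F.NeBot] {s : ℕ → Set α}
    (hs : Pairwise (Disjoint on s)) : ∃ r, ⋃ i, s (2 * i + r) ∉ F := by
  by_contra! hmem
  have hdisj : Disjoint (⋃ i, s (2 * i + 0)) (⋃ i, s (2 * i + 1)) := by
    simp only [disjoint_iUnion_left, disjoint_iUnion_right]
    exact fun i j => hs (by omega)
  exact (Filter.nonempty_of_mem (Filter.inter_mem (hmem 0) (hmem 1))).ne_empty hdisj.inter_eq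

theorem exists_forall_exists_notMem_Ico_subset_lt (F : Filter ℕ) [F.NeBot] (f : Set ℕ → ℕ) :
    ∃ m, ∀ N, ∃ B ∉ F, Ico m N ⊆ B ∧ f B < m := by
  by_contra! hcon
  choose N hN using hcon
  let b : ℕ → ℕ := fun n => (fun m => max (N m) (m + 1))^[n] 0
  have b_succ (n : ℕ) : b (n + 1) = max (N (b n)) (b n + 1) := iterate_succ_apply' _ n 0
  have b_strictMono : StrictMono b :=
    strictMono_nat_of_lt_succ fun n => (le_max_right _ _).trans_eq (b_succ n).symm
  have le_apply {B : Set ℕ} (hB : B ∉ F) {n : ℕ} (hn : Ico (b n) (b (n + 1)) ⊆ B) : n ≤ f B :=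
    b_strictMono.le_apply.trans <| hN _ B hB <|
      (Ico_subset_Ico_right ((le_max_left _ _).trans_eq (b_succ n).symm)).trans hn
  obtain ⟨r, hr⟩ :=
    exists_iUnion_two_mul_add_notMem F b_strictMono.monotone.pairwise_disjoint_on_Ico_succ
  let E : Set ℕ := ⋃ i, Ico (b (2 * i + r)) (b (2 * i + r + 1))
  have index_le : 2 * (f E + 1) + r ≤ f E :=
    le_apply hr (subset_iUnion (fun i => Ico (b (2 * i + r)) (b (2 * i + r + 1))) (f E + 1))
  omega

section PlayerI

variable {U : Ultrafilter ℕ}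

theorem IsPPoint.exists_mem_forall_finite_sdiff (hU : IsPPoint U)
    {ι : Type*} [Countable ι] {A : ι → Set ℕ} (hA : ∀ i, A i ∈ U) :
    ∃ X ∈ U, ∀ i, (X \ A i).Finite := by
  cases isEmpty_or_nonempty ι with
  | inl _ => exact ⟨univ, Filter.univ_mem, isEmptyElim⟩
  | inr _ =>
    obtain ⟨e, he⟩ := exists_surjective_nat ι
    obtain ⟨X, hX, hfin⟩ := hU (A ∘ e) fun n => hA (e n)
    exact ⟨X, hX, he.forall.2 hfin⟩

theorem IsPPoint.exists_mem_forall_finset_subset (hU : IsPPoint U)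
    {ι : Type*} [Countable ι] (s : ι → Set ℕ) :
    ∃ X ∈ U, ∀ i, ∃ F : Finset ℕ, ↑F ⊆ s i ∧ (s i ∉ U → X ∩ s i ⊆ F) := by
  obtain ⟨X, hX, hfin⟩ := hU.exists_mem_forall_finite_sdiff
    (A := fun i : {i // s i ∉ U} => (s i)ᶜ) fun i => Ultrafilter.compl_mem_iff_notMem.2 i.2
  refine ⟨X, hX, fun i => ?_⟩
  by_cases hi : s i ∈ U
  · exact ⟨∅, by simp, fun h => (h hi).elim⟩
  · have hXi : (X ∩ s i).Finite := by simpa only [sdiff_compl] using hfin ⟨i, hi⟩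
    exact ⟨hXi.toFinset, by simp, fun _ => by simp⟩

theorem IsPPoint.not_winningStrategyI (hU : IsPPoint U)
    (σ : List (Finset ℕ) → Set ℕ) : ¬ WinningStrategyI U σ := by
  rintro ⟨hlegal, hwin⟩
  obtain ⟨X, hX, hresponse⟩ := hU.exists_mem_forall_finset_subset σ
  choose g g_subset subset_g using hresponse
  obtain ⟨F, hF⟩ := exists_forall_eq_apply_map_range g
  have hplay : ConsistentPlay σ F := fun n => by rw [hF n]; exact g_subset _
  obtain ⟨-, hnotMem, hcover⟩ := hlegal F hplay
  refine hwin F hplay (Filter.mem_of_superset hX fun x hx => ?_)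
  obtain ⟨n, hn⟩ := mem_iUnion.1 (hcover.ge (mem_univ x))
  refine mem_iUnion.2 ⟨n, ?_⟩
  rw [hF n]
  exact subset_g _ (hnotMem n) ⟨hx, hn⟩

end PlayerI

section PlayerII

variable {U : Ultrafilter ℕ}

/-- A move `I` of player I against the strategy `μ`, after the moves `l`, that blocks the interval
`[m, N)`: the points of `[m, N)` are used up, while the response of `μ` stays below `m`. The points
below `a` are used up too, so that the moves of a play with unbounded `a` cover `ℕ`. -/
structure IsBlockingMove (U : Ultrafilter ℕ) (μ : List (Set ℕ) → Finset ℕ) (l : List (Set ℕ))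
    (a m N : ℕ) (I : Set ℕ) : Prop where
  notMem : I ∉ U
  disjoint : ∀ S ∈ l, Disjoint S I
  Iio_subset : Iio a ⊆ ⋃ S ∈ l ++ [I], S
  Ico_subset : Ico m N ⊆ ⋃ S ∈ l ++ [I], S
  response_lt : ∀ x ∈ μ (l ++ [I]), x < m

theorem Nonprincipal.exists_isBlockingMove (hU : Nonprincipal U)
    (μ : List (Set ℕ) → Finset ℕ) (l : List (Set ℕ)) (a : ℕ) :
    ∃ m, a < m ∧ ∀ N, ∃ I, IsBlockingMove U μ l a m N I := by
  let move : Set ℕ → Set ℕ := fun B => (B ∪ Iio a) \ ⋃ S ∈ l, S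
  have subset_move (B : Set ℕ) : B ∪ Iio a ⊆ ⋃ S ∈ l ++ [move B], S := by
    intro x hx
    by_cases hxl : x ∈ ⋃ S ∈ l, S
    · exact biUnion_mono (fun S hS => List.mem_append_left _ hS) (fun _ _ => subset_rfl) hxl
    · exact mem_biUnion (List.mem_append_right l (List.mem_singleton_self _)) ⟨hx, hxl⟩
  obtain ⟨m, hm⟩ := exists_forall_exists_notMem_Ico_subset_lt (U : Filter ℕ)
    fun B => max a ((μ (l ++ [move B])).sup id)
  refine ⟨m, ?_, fun N => ?_⟩
  · obtain ⟨B, -, -, hlt⟩ := hm 0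
    exact (le_max_left _ _).trans_lt hlt
  obtain ⟨B, hB, hIco, hlt⟩ := hm N
  have union_notMem : B ∪ Iio a ∉ U :=
    Ultrafilter.union_mem_iff.not.2 (not_or.2 ⟨hB, hU _ (finite_Iio a)⟩)
  exact ⟨move B,
    { notMem := fun h => union_notMem (Filter.mem_of_superset h sdiff_subset)
      disjoint := fun S hS => disjoint_sdiff_right.mono_left <|
        subset_biUnion_of_mem (u := id) hS
      Iio_subset := subset_union_right.trans (subset_move B)
      Ico_subset := hIco.trans (subset_union_left.trans (subset_move B))
      response_lt := fun x hx =>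
        ((Finset.le_sup (f := id) hx).trans (le_max_right _ _)).trans_lt hlt }⟩

theorem WinningStrategyII.exists_mem_forall_disjoint_Ico
    {μ : List (Set ℕ) → Finset ℕ} (hμ : WinningStrategyII U μ) {I : ℕ → Set ℕ} {a m N : ℕ → ℕ}
    (hI : ∀ n, IsBlockingMove U μ ((List.range n).map I) (a n) (m n) (N n) (I n))
    (ha : ∀ x, ∃ n, x < a n) (hm : Monotone m) :
    ∃ Y ∈ U, ∀ n, Disjoint Y (Ico (m n) (N n)) := by
  obtain ⟨hlegal, hwin⟩ := hμ
  have history_append (n : ℕ) : (List.range n).map I ++ [I n] = (List.range (n + 1)).map I := by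
    simp [List.range_succ]
  have hdisj : Pairwise (Disjoint on I) := (pairwise_disjoint_on I).2 fun i n hin =>
    (hI n).disjoint _ (List.mem_map_of_mem (List.mem_range.2 hin))
  have exists_le_of_mem {n x : ℕ} (hx : x ∈ ⋃ S ∈ (List.range n).map I ++ [I n], S) :
      ∃ j ≤ n, x ∈ I j := by
    simpa [history_append, Nat.lt_succ_iff] using hx
  have hcover : ⋃ n, I n = univ := by
    refine eq_univ_of_forall fun x => ?_
    obtain ⟨n, hn⟩ := ha x
    obtain ⟨j, -, hj⟩ := exists_le_of_mem ((hI n).Iio_subset hn)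
    exact mem_iUnion_of_mem j hj
  refine ⟨_, hwin I (fun _ _ h => hdisj h) (fun n => (hI n).notMem) hcover, fun n => ?_⟩
  refine disjoint_left.2 fun x hxY hxIco => ?_
  obtain ⟨k, hk⟩ := mem_iUnion.1 hxY
  rw [← history_append, Finset.mem_coe] at hk
  obtain ⟨j, hjn, hxj⟩ := exists_le_of_mem ((hI n).Ico_subset hxIco)
  obtain rfl : k = j := hdisj.eq (not_disjoint_iff.2 ⟨x, hlegal _ _ hk, hxj⟩)
  exact (((hI k).response_lt x hk).trans_le (hm hjn)).not_ge hxIco.1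

theorem Nonprincipal.not_winningStrategyII (hU : Nonprincipal U)
    (μ : List (Set ℕ) → Finset ℕ) : ¬ WinningStrategyII U μ := by
  intro hμ
  obtain ⟨a, I, a_strictMono, hI⟩ := exists_interleaved_seq (hU.exists_isBlockingMove μ)
  have exists_outcome (r : ℕ) (hr : r < 2) :
      ∃ Y ∈ U, ∀ n, Disjoint Y (Ico (a (2 * n + r + 1)) (a (2 * n + r + 2))) := by
    refine hμ.exists_mem_forall_disjoint_Ico (hI r hr) (fun x => ⟨x + 1, ?_⟩) fun i j hij => ?_
    · exact lt_of_lt_of_le (by omega) a_strictMono.le_apply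
    · exact a_strictMono.monotone (by omega)
  obtain ⟨Y, hY, disjoint_Y⟩ := exists_outcome 0 (by norm_num)
  obtain ⟨Z, hZ, disjoint_Z⟩ := exists_outcome 1 (by norm_num)
  have disjoint_inter (k : ℕ) : Disjoint (Y ∩ Z) (Ico (a (k + 1)) (a (k + 2))) := by
    obtain ⟨n, rfl | rfl⟩ := k.even_or_odd'
    · exact (disjoint_Y n).mono_left inter_subset_left
    · exact (disjoint_Z n).mono_left inter_subset_right
  have iUnion_Ico : ⋃ k, Ico (a (k + 1)) (a (k + 2)) = Ici (a 1) :=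
    have hmono : StrictMono fun k => a (k + 1) := a_strictMono.comp (strictMono_id.add_const 1)
    iUnion_Ico_map_succ_eq_Ici (fun k => hmono.monotone k.zero_le)
      hmono.not_bddAbove_range_of_wellFoundedLT
  have inter_subset : Y ∩ Z ⊆ Iio (a 1) := by
    rw [← compl_Ici, subset_compl_iff_disjoint_right, ← iUnion_Ico, disjoint_iUnion_right]
    exact disjoint_inter
  exact hU _ ((finite_Iio _).subset inter_subset) (Filter.inter_mem hY hZ)

end PlayerII

theorem game_GU_undetermined
    (U : Ultrafilter ℕ) (hNP : Nonprincipal U) (hPP : IsPPoint U) :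
    (¬ ∃ σ : List (Finset ℕ) → Set ℕ, WinningStrategyI U σ) ∧
    (¬ ∃ μ : List (Set ℕ) → Finset ℕ, WinningStrategyII U μ) :=
  ⟨fun ⟨σ, hσ⟩ => hPP.not_winningStrategyI σ hσ, fun ⟨μ, hμ⟩ => hNP.not_winningStrategyII μ hμ⟩
end

section
/- Let U be a nonprincipal p-point ultrafilter on ℕ. Then player II does not have a winning strategy in the game G_U. That is, for every function μ assigning to each finite nonempty sequence ⟨I_0,…,I_n⟩ of subsets of ℕ a finite set μ(I_0,…,I_n) ⊆ I_n, there exists a sequence ⟨I_n : n ∈ ℕ⟩ of pairwise disjoint subsets of ℕ, each not belonging to U, with ⋃_n I_n = ℕ, such that ⋃_n μ(I_0,…,I_n) ∉ U. -/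
/-!
Fix a filter `F` (such as `U`), a function `f` tending to infinity along `F` (such as the identity
of `ℕ`), and a strategy `μ` of player II. Player I can always find an `n` such that, for `m` as
large as desired, some legal move contains `f ⁻¹' [n, m)` up to points already played, while the
answer to it stays in `f ⁻¹' [0, n)`. Otherwise there would be a strictly increasing sequence of
integers `a i` such that every set containing `f ⁻¹' [a i, a (i + 1))` for arbitrarily large `i`
belongs to `F`. The union of the even-numbered blocks and its complement would both belong to `F`.

Player I plays two games alternately, taking as `m` the number `n` of the next move, which belongs
to the other game. The blocks `[n, m)` of the two games together cover a final segment of `ℕ`.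
Within a game, player II never picks a point of its blocks: earlier answers are too small, and later
ones avoid the points already played. So `f` is bounded on the intersection of the two outcomes, and
they cannot both belong to `F`.
-/

section Game

open Filter Set

lemma exists_strictMono_map_le_succ (g : ℕ → ℕ) :
    ∃ a : ℕ → ℕ, StrictMono a ∧ ∀ i, g (a i) ≤ a (i + 1) := by
  let next : ℕ → ℕ := fun n => max (n + 1) (g n)
  have next_iterate (i : ℕ) : next^[i + 1] 0 = next (next^[i] 0) :=
    Function.iterate_succ_apply' next i 0
  refine ⟨fun i => next^[i] 0, strictMono_nat_of_lt_succ fun i => ?_, fun i => ?_⟩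
  · exact (le_max_left _ _).trans_eq (next_iterate i).symm
  · exact (le_max_right _ _).trans_eq (next_iterate i).symm

variable {α : Type*} {F : Filter α} {f : α → ℕ}

lemma exists_forall_exists_preimage_Ico_subset (F : Filter α) [F.NeBot] (f : α → ℕ)
    (c : Set α → ℕ) :
    ∃ n, ∀ m, ∃ A ∉ F, c A ≤ n ∧ f ⁻¹' Ico n m ⊆ A := by
  by_contra! H
  choose g hg using H
  obtain ⟨a, a_strictMono, g_le⟩ := exists_strictMono_map_le_succ g
  have not_block_subset {A : Set α} (hA : A ∉ F) {i : ℕ} (hi : c A ≤ i) :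
      ¬ f ⁻¹' Ico (a i) (a (i + 1)) ⊆ A := fun h =>
    hg (a i) A hA (hi.trans a_strictMono.le_apply)
      ((preimage_mono (Ico_subset_Ico_right (g_le i))).trans h)
  let E : Set ℕ := ⋃ i, Ico (a (2 * i)) (a (2 * i + 1))
  by_cases hE : f ⁻¹' E ∈ F
  · have odd_block_disjoint (k : ℕ) : Disjoint (Ico (a (2 * k + 1)) (a (2 * k + 2))) E :=
      disjoint_iUnion_right.2 fun i =>
        a_strictMono.monotone.pairwise_disjoint_on_Ico_succ (by omega)
    exact not_block_subset (compl_notMem hE) (i := 2 * c (f ⁻¹' E)ᶜ + 1) (by omega)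
      ((odd_block_disjoint _).preimage f).subset_compl_right
  · exact not_block_subset hE (i := 2 * c (f ⁻¹' E)) (by omega)
      (preimage_mono (subset_iUnion (fun i => Ico (a (2 * i)) (a (2 * i + 1))) _))

/-- At the position `p` of a game in which player II follows `μ`, the set `J` is a legal move of
player I after which the points with `f x < N` or `n ≤ f x < m` are exhausted, and to which player
II answers below `n`. Answering later in the block `[n, m)` is then impossible for player II. -/
structure IsBlockingMove_s2 (F : Filter α) (f : α → ℕ) (μ : List (Set α) → Finset α)
    (p : List (Set α)) (N n m : ℕ) (J : Set α) : Prop where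
  notMem : J ∉ F
  disjoint : Disjoint (⋃ A ∈ p, A) J
  covers : f ⁻¹' (Iio N ∪ Ico n m) ⊆ (⋃ A ∈ p, A) ∪ J
  reply_lt : ∀ x ∈ μ (p ++ [J]), f x < n

lemma union_preimage_Iio_notMem (hf : Tendsto f F atTop) {A : Set α} (hA : A ∉ F) (N : ℕ) :
    A ∪ f ⁻¹' Iio N ∉ F := fun h => hA <| by
  filter_upwards [h, hf.eventually_ge_atTop N] with x hx hN
  exact hx.resolve_right hN.not_gt

lemma exists_gt_forall_exists_isBlockingMove [F.NeBot] (hf : Tendsto f F atTop)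
    (μ : List (Set α) → Finset α) (p : List (Set α)) (N : ℕ) :
    ∃ n > N, ∀ m, ∃ J, IsBlockingMove_s2 F f μ p N n m J := by
  let played : Set α := ⋃ A ∈ p, A
  let move : Set α → Set α := fun A => (A ∪ f ⁻¹' Iio N) \ played
  obtain ⟨n, hn⟩ := exists_forall_exists_preimage_Ico_subset F f
    fun A => (μ (p ++ [move A])).sup fun x => f x + 1
  refine ⟨max n (N + 1), Nat.lt_of_succ_le (le_max_right _ _), fun m => ?_⟩
  obtain ⟨A, hA, reply_le, block_subset⟩ := hn m
  refine ⟨move A, ?_, disjoint_sdiff_right, ?_, fun x hx => ?_⟩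
  · exact fun h => union_preimage_Iio_notMem hf hA N (mem_of_superset h sdiff_subset)
  · rw [union_sdiff_self, preimage_union]
    refine subset_union_of_subset_right (union_subset subset_union_right ?_) _
    exact subset_union_of_subset_left
      ((preimage_mono (Ico_subset_Ico_left (le_max_left _ _))).trans block_subset) _
  · exact (Finset.le_sup (f := fun x => f x + 1) hx).trans (reply_le.trans (le_max_left _ _))

/-- The sequence of moves `I` of player I against `μ` consists of blocking moves: the `i`-th one
exhausts the points with `f x < N i` and takes the block `[n i, N (i + 1))`. -/
def IsBlockingPlay (F : Filter α) (f : α → ℕ) (μ : List (Set α) → Finset α) (N n : ℕ → ℕ)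
    (I : ℕ → Set α) : Prop :=
  ∀ i, IsBlockingMove_s2 F f μ ((List.range i).map I) (N i) (n i) (N (i + 1)) (I i)

/-- The set of all points picked by player II, following `μ`, against the moves `I`. -/
def outcome (μ : List (Set α) → Finset α) (I : ℕ → Set α) : Set α :=
  ⋃ n, ↑(μ ((List.range (n + 1)).map I))

namespace IsBlockingPlay

variable {μ : List (Set α) → Finset α} {N n : ℕ → ℕ} {I : ℕ → Set α}

lemma disjoint_of_lt (h : IsBlockingPlay F f μ N n I) {i j : ℕ} (hij : i < j) :
    Disjoint (I i) (I j) :=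
  (h j).disjoint.mono_left <|
    subset_biUnion_of_mem (u := id) (List.mem_map_of_mem (List.mem_range.2 hij))

lemma pairwise_disjoint (h : IsBlockingPlay F f μ N n I) : Pairwise (Function.onFun Disjoint I) :=
  (pairwise_disjoint_on I).2 fun _ _ => h.disjoint_of_lt

lemma exists_le_mem (h : IsBlockingPlay F f μ N n I) {i : ℕ} {x : α}
    (hx : f x ∈ Iio (N i) ∪ Ico (n i) (N (i + 1))) : ∃ j ≤ i, x ∈ I j := by
  rcases (h i).covers hx with hx | hx
  · obtain ⟨_, hA, hxA⟩ := mem_iUnion₂.1 hx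
    obtain ⟨j, hj, rfl⟩ := List.mem_map.1 hA
    exact ⟨j, (List.mem_range.1 hj).le, hxA⟩
  · exact ⟨i, le_rfl, hx⟩

lemma iUnion_eq_univ (h : IsBlockingPlay F f μ N n I) (hN : StrictMono N) :
    ⋃ i, I i = univ := by
  refine iUnion_eq_univ_iff.2 fun x => ?_
  have below : f x < N (f x + 1) := hN.le_apply
  obtain ⟨j, -, hj⟩ := h.exists_le_mem (Or.inl below)
  exact ⟨j, hj⟩

lemma outcome_disjoint_block (h : IsBlockingPlay F f μ N n I)
    (hμ : ∀ l I, (μ (l ++ [I]) : Set α) ⊆ I) (hn : StrictMono n) (i : ℕ) :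
    Disjoint (outcome μ I) (f ⁻¹' Ico (n i) (N (i + 1))) := by
  refine disjoint_iUnion_left.2 fun j => Set.disjoint_left.2 fun x hx hblock => ?_
  rw [List.range_succ, List.map_append] at hx
  have hij : i < j := hn.lt_iff_lt.1 (hblock.1.trans_lt ((h j).reply_lt x hx))
  obtain ⟨k, hki, hxk⟩ := h.exists_le_mem (Or.inr hblock)
  exact Set.disjoint_left.1 (h.disjoint_of_lt (hki.trans_lt hij)) hxk (hμ _ _ hx)

end IsBlockingPlay

lemma exists_interleaved_isBlockingPlay [F.NeBot] (hf : Tendsto f F atTop)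
    (μ : List (Set α) → Finset α) :
    ∃ (a : ℕ → ℕ) (I₀ I₁ : ℕ → Set α), StrictMono a ∧
      IsBlockingPlay F f μ (fun i => a (2 * i)) (fun i => a (2 * i + 1)) I₀ ∧
      IsBlockingPlay F f μ (fun i => a (2 * i + 1)) (fun i => a (2 * i + 2)) I₁ := by
  choose bound lt_bound move isBlocking using exists_gt_forall_exists_isBlockingMove hf μ
  -- A state consists of the position in the game to be continued, that in the other game, and `N`.
  let next : List (Set α) × List (Set α) × ℕ → List (Set α) × List (Set α) × ℕ :=
    fun (p, q, N) => (q, p ++ [move p N (bound q (bound p N))], bound p N)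
  let state (k : ℕ) : List (Set α) × List (Set α) × ℕ := next^[k] ([], [], 0)
  have state_succ (k : ℕ) : state (k + 1) = next (state k) := Function.iterate_succ_apply' ..
  let p (k : ℕ) : List (Set α) := (state k).1
  let a (k : ℕ) : ℕ := (state k).2.2
  let I (k : ℕ) : Set α := move (p k) (a k) (a (k + 2))
  have a_succ (k : ℕ) : a (k + 1) = bound (p k) (a k) := by
    simp only [a, p, state_succ, next]
  have p_add_two (k : ℕ) : p (k + 2) = p k ++ [I k] := by
    simp only [I, a, p, state_succ, next]
  have blocking (k : ℕ) : IsBlockingMove_s2 F f μ (p k) (a k) (a (k + 1)) (a (k + 2)) (I k) :=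
    a_succ k ▸ isBlocking (p k) (a k) (a (k + 2))
  have p_even (i : ℕ) : p (2 * i) = (List.range i).map fun j => I (2 * j) := by
    induction i with
    | zero => rfl
    | succ i ih => rw [List.range_succ, List.map_append, ← ih]; exact p_add_two _
  have p_odd (i : ℕ) : p (2 * i + 1) = (List.range i).map fun j => I (2 * j + 1) := by
    induction i with
    | zero => rfl
    | succ i ih => rw [List.range_succ, List.map_append, ← ih]; exact p_add_two _
  exact ⟨a, fun i => I (2 * i), fun i => I (2 * i + 1),
    strictMono_nat_of_lt_succ fun k => a_succ k ▸ lt_bound _ _,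
    fun i => p_even i ▸ blocking (2 * i), fun i => p_odd i ▸ blocking (2 * i + 1)⟩

lemma outcome_inter_outcome_subset {μ : List (Set α) → Finset α}
    (hμ : ∀ l I, (μ (l ++ [I]) : Set α) ⊆ I) {a : ℕ → ℕ} (ha : StrictMono a) {I₀ I₁ : ℕ → Set α}
    (h₀ : IsBlockingPlay F f μ (fun i => a (2 * i)) (fun i => a (2 * i + 1)) I₀)
    (h₁ : IsBlockingPlay F f μ (fun i => a (2 * i + 1)) (fun i => a (2 * i + 2)) I₁) :
    outcome μ I₀ ∩ outcome μ I₁ ⊆ f ⁻¹' Iio (a 1) := by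
  rintro x ⟨hx₀, hx₁⟩
  by_contra hx
  have shift_strictMono : StrictMono fun k => a (k + 1) := fun _ _ h => ha (by omega)
  have iUnion_blocks : ⋃ k, Ico (a (k + 1)) (a (k + 2)) = Ici (a 1) :=
    iUnion_Ico_map_succ_eq_Ici (fun _ => shift_strictMono.monotone bot_le)
      shift_strictMono.not_bddAbove_range_of_wellFoundedLT
  obtain ⟨k, hk⟩ : ∃ k, f x ∈ Ico (a (k + 1)) (a (k + 2)) :=
    mem_iUnion.1 (iUnion_blocks.ge (not_lt.1 hx : a 1 ≤ f x))
  obtain ⟨i, rfl | rfl⟩ := k.even_or_odd'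
  · exact Set.disjoint_left.1
      (h₀.outcome_disjoint_block hμ (fun _ _ h => ha (by omega)) i) hx₀ hk
  · exact Set.disjoint_left.1
      (h₁.outcome_disjoint_block hμ (fun _ _ h => ha (by omega)) i) hx₁ hk

lemma Nonprincipal.tendsto_id_atTop {U : Ultrafilter ℕ} (hU : Nonprincipal U) :
    Tendsto id (U : Filter ℕ) atTop :=
  tendsto_atTop.2 fun N => by
    filter_upwards [U.compl_mem_iff_notMem.2 (hU _ (finite_Iio N))] with n hn
    exact not_lt.1 hn

end Game

theorem playerII_no_winning_strategy_general {α : Type*} (F : Filter α) [F.NeBot] (f : α → ℕ)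
    (hf : Filter.Tendsto f F Filter.atTop)
    (μ : List (Set α) → Finset α) (hμ : ∀ l I, (μ (l ++ [I]) : Set α) ⊆ I) :
    ∃ I : ℕ → Set α,
      (∀ m n, m ≠ n → Disjoint (I m) (I n)) ∧
      (∀ n, I n ∉ F) ∧
      (⋃ n, I n) = Set.univ ∧
      (⋃ n, ↑(μ ((List.range (n + 1)).map I)) : Set α) ∉ F := by
  obtain ⟨a, I₀, I₁, ha, h₀, h₁⟩ := exists_interleaved_isBlockingPlay hf μ
  have not_both : ¬ (outcome μ I₀ ∈ F ∧ outcome μ I₁ ∈ F) := fun ⟨mem₀, mem₁⟩ => by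
    have bounded : ∀ᶠ x in F, f x < a 1 :=
      Filter.mem_of_superset (Filter.inter_mem mem₀ mem₁)
        (outcome_inter_outcome_subset hμ ha h₀ h₁)
    obtain ⟨x, hlt, hle⟩ := (bounded.and (hf.eventually_ge_atTop (a 1))).exists
    exact hle.not_gt hlt
  rcases not_and_or.1 not_both with loses | loses
  · exact ⟨I₀, fun _ _ hne => h₀.pairwise_disjoint hne, fun i => (h₀ i).notMem,
      h₀.iUnion_eq_univ fun _ _ h => ha (by omega), loses⟩
  · exact ⟨I₁, fun _ _ hne => h₁.pairwise_disjoint hne, fun i => (h₁ i).notMem,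
      h₁.iUnion_eq_univ fun _ _ h => ha (by omega), loses⟩

theorem playerII_no_winning_strategy
    (U : Ultrafilter ℕ) (hNP : Nonprincipal U) (hPP : IsPPoint U)
    (μ : List (Set ℕ) → Finset ℕ) (hμ : LegalStrategyII μ) :
    ∃ I : ℕ → Set ℕ,
      (∀ m n, m ≠ n → Disjoint (I m) (I n)) ∧
      (∀ n, I n ∉ U) ∧
      (⋃ n, I n) = Set.univ ∧
      (⋃ n, ↑(μ ((List.range (n + 1)).map I)) : Set ℕ) ∉ U :=
  playerII_no_winning_strategy_general U id hNP.tendsto_id_atTop μ hμ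
end
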